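/- Let p ≥ 0 be an integer. There exists a constant C > 0 depending only on p such that for every interval (α, β) of length h > 0 with midpoint m = (α+β)/2, and every function g : (α, β) → ℝ that coincides with a polynomial of degree at most p on (α, m) and with a polynomial of degree at most p on (m, β), one has ∫_α^β |g(x)| dx ≥ C h^{1/2} ( ∫_α^β g(x)² dx )^{1/2}. -/

import Mathlib

open MeasureTheory Polynomial

/-!
The inclusion of continuous functions into `L¹` is injective, so on a finite-dimensional space of
continuous functions it is bounded below: the `L¹` norm controls the sup norm. Applied to
polynomials of degree at most `n` on `[0, 1]` and transported by an affine change of variables,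
this gives `|q| ≤ K / (b - a) * ∫ |q|` on `[a, b]` with `K` depending only on `n`, and integrating
`q² ≤ (sup |q|) |q|` gives `∫ q² ≤ K / (b - a) * (∫ |q|)²`. Estimates of this last form add up over
adjacent intervals because `A² + B² ≤ (A + B)²` for `A, B ≥ 0`.
-/

section ContinuousMap

variable {X E 𝕜 : Type*} [TopologicalSpace X] [CompactSpace X] [MeasurableSpace X] [BorelSpace X]
  [NormedAddCommGroup E] [SecondCountableTopologyEither X E] (μ : Measure X) [IsFiniteMeasure μ]

theorem exists_norm_le_mul_norm_toLp [NontriviallyNormedField 𝕜] [CompleteSpace 𝕜]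
    [NormedSpace 𝕜 E] [μ.IsOpenPosMeasure] (p : ENNReal) [Fact (1 ≤ p)]
    (V : Submodule 𝕜 C(X, E)) [FiniteDimensional 𝕜 V] :
    ∃ K : ℝ, 0 < K ∧ ∀ f ∈ V, ‖f‖ ≤ K * ‖ContinuousMap.toLp p μ 𝕜 f‖ := by
  let T : V →ₗ[𝕜] Lp E p μ := (ContinuousMap.toLp p μ 𝕜).toLinearMap ∘ₗ V.subtype
  have hT : Function.Injective T :=
    (ContinuousMap.toLp_injective μ).comp V.injective_subtype
  obtain ⟨K, hK, hanti⟩ := T.exists_antilipschitzWith (LinearMap.ker_eq_bot.mpr hT)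
  exact ⟨K, hK, fun f hf => ZeroHomClass.bound_of_antilipschitz T hanti ⟨f, hf⟩⟩

theorem norm_toLp_one_eq_integral_norm [NormedRing 𝕜] [Module 𝕜 E] [IsBoundedSMul 𝕜 E]
    (f : C(X, E)) :
    ‖ContinuousMap.toLp 1 μ 𝕜 f‖ = ∫ x, ‖f x‖ ∂μ := by
  rw [L1.norm_eq_integral_norm]
  exact integral_congr_ae ((ContinuousMap.coeFn_toLp μ f).fun_comp norm)

end ContinuousMap

theorem isOpenPosMeasure_comap_subtype_val {X : Type*} [TopologicalSpace X] [MeasurableSpace X]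
    (μ : Measure X) [μ.IsOpenPosMeasure] {s : Set X} (hs : MeasurableSet s)
    (hs_closure : s ⊆ closure (interior s)) :
    (μ.comap ((↑) : s → X)).IsOpenPosMeasure where
  open_pos := by
    rintro _ ⟨V, hV, rfl⟩ ⟨x, hx⟩
    have hne : (V ∩ interior s).Nonempty := mem_closure_iff.mp (hs_closure x.2) V hV hx
    have hpos : 0 < μ (V ∩ interior s) := (hV.inter isOpen_interior).measure_pos μ hne
    rw [comap_subtype_coe_apply hs, Subtype.image_preimage_coe]
    have hsub : V ∩ interior s ⊆ s ∩ V := fun y hy => ⟨interior_subset hy.2, hy.1⟩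
    exact (hpos.trans_le (measure_mono hsub)).ne'

theorem integral_unitInterval_eq_intervalIntegral {E : Type*} [NormedAddCommGroup E]
    [NormedSpace ℝ E] (f : ℝ → E) :
    ∫ x : unitInterval, f x = ∫ x in (0 : ℝ)..1, f x := by
  rw [unitInterval.measurePreserving_coe.integral_comp unitInterval.measurableEmbedding_coe,
    integral_Icc_eq_integral_Ioc, intervalIntegral.integral_of_le zero_le_one]

theorem exists_abs_eval_le_integral_unitInterval (n : ℕ) :
    ∃ K : ℝ, 0 < K ∧ ∀ q : ℝ[X], q.natDegree ≤ n → ∀ x ∈ Set.Icc (0 : ℝ) 1,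
      |q.eval x| ≤ K * ∫ y in (0 : ℝ)..1, |q.eval y| := by
  have : (volume : Measure unitInterval).IsOpenPosMeasure :=
    isOpenPosMeasure_comap_subtype_val volume measurableSet_Icc
      (by simp [interior_Icc, closure_Ioo])
  let V : Submodule ℝ C(unitInterval, ℝ) :=
    (degreeLT ℝ (n + 1)).map (toContinuousMapOnAlgHom unitInterval).toLinearMap
  obtain ⟨K, hK, hbound⟩ := exists_norm_le_mul_norm_toLp volume 1 V
  refine ⟨K, hK, fun q hq x hx => ?_⟩
  have hqV : q.toContinuousMapOn unitInterval ∈ V :=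
    Submodule.mem_map_of_mem <| by
      rwa [degreeLT_succ_eq_degreeLE, mem_degreeLE, ← natDegree_le_iff_degree_le]
  calc |q.eval x| ≤ ‖q.toContinuousMapOn unitInterval‖ :=
        (q.toContinuousMapOn unitInterval).norm_coe_le_norm ⟨x, hx⟩
    _ ≤ K * ∫ y : unitInterval, |q.eval (y : ℝ)| := by
        simpa only [norm_toLp_one_eq_integral_norm] using! hbound _ hqV
    _ = K * ∫ y in (0 : ℝ)..1, |q.eval y| := by
        rw [integral_unitInterval_eq_intervalIntegral (fun y => |q.eval y|)]

theorem exists_abs_eval_le_integral (n : ℕ) :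
    ∃ K : ℝ, 0 < K ∧ ∀ a b : ℝ, a < b → ∀ q : ℝ[X], q.natDegree ≤ n → ∀ x ∈ Set.Icc a b,
      |q.eval x| ≤ K / (b - a) * ∫ y in a..b, |q.eval y| := by
  obtain ⟨K, hK, hunit⟩ := exists_abs_eval_le_integral_unitInterval n
  refine ⟨K, hK, fun a b hab q hq x hx => ?_⟩
  have hba : 0 < b - a := sub_pos.mpr hab
  let r : ℝ[X] := q.comp (C (b - a) * X + C a)
  have hr_eval (t : ℝ) : r.eval t = q.eval ((b - a) * t + a) := by simp [r]
  have hr_deg : r.natDegree ≤ n := by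
    rwa [natDegree_comp, natDegree_linear hba.ne', mul_one]
  have ht : (x - a) / (b - a) ∈ Set.Icc (0 : ℝ) 1 :=
    ⟨div_nonneg (sub_nonneg.mpr hx.1) hba.le,
      (div_le_one hba).mpr (sub_le_sub_right hx.2 a)⟩
  calc |q.eval x| = |r.eval ((x - a) / (b - a))| := by
        rw [hr_eval, mul_div_cancel₀ _ hba.ne', sub_add_cancel]
    _ ≤ K * ∫ t in (0 : ℝ)..1, |r.eval t| := hunit r hr_deg _ ht
    _ = K / (b - a) * ∫ y in a..b, |q.eval y| := by
        simp only [hr_eval]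
        rw [intervalIntegral.integral_comp_mul_add (fun y => |q.eval y|) hba.ne']
        simp [div_eq_mul_inv, mul_assoc]

theorem integral_norm_sq_le_mul_integral_norm {X E : Type*} [MeasurableSpace X]
    [NormedAddCommGroup E] {μ : Measure X} {f : X → E} {M : ℝ} (hf : Integrable f μ)
    (hM : ∀ᵐ x ∂μ, ‖f x‖ ≤ M) :
    ∫ x, ‖f x‖ ^ 2 ∂μ ≤ M * ∫ x, ‖f x‖ ∂μ := by
  rw [← integral_const_mul]
  refine integral_mono_of_nonneg (ae_of_all _ fun x => sq_nonneg _) (hf.norm.const_mul M) ?_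
  filter_upwards [hM] with x hx
  rw [sq]
  gcongr

theorem exists_integral_sq_eval_le (n : ℕ) :
    ∃ K : ℝ, 0 < K ∧ ∀ a b : ℝ, a < b → ∀ q : ℝ[X], q.natDegree ≤ n →
      ∫ x in a..b, q.eval x ^ 2 ≤ K / (b - a) * (∫ x in a..b, |q.eval x|) ^ 2 := by
  obtain ⟨K, hK, hsup⟩ := exists_abs_eval_le_integral n
  refine ⟨K, hK, fun a b hab q hq => ?_⟩
  have hint : IntegrableOn q.eval (Set.Ioc a b) := (q.continuous.intervalIntegrable a b).1
  have hbound : ∀ᵐ x ∂volume.restrict (Set.Ioc a b),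
      ‖q.eval x‖ ≤ K / (b - a) * ∫ y in a..b, |q.eval y| :=
    ae_restrict_of_forall_mem measurableSet_Ioc fun x hx =>
      hsup a b hab q hq x (Set.Ioc_subset_Icc_self hx)
  have := integral_norm_sq_le_mul_integral_norm hint hbound
  simpa only [Real.norm_eq_abs, sq_abs, ← intervalIntegral.integral_of_le hab.le, mul_assoc,
    ← sq] using this

theorem integral_le_mul_integral_pow_of_adjacent {μ : Measure ℝ} {F f : ℝ → ℝ} {a m b M : ℝ}
    {k : ℕ} (ham : a ≤ m) (hmb : m ≤ b) (hk : k ≠ 0) (hM : 0 ≤ M) (hf_nonneg : ∀ x, 0 ≤ f x)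
    (hF_left : IntervalIntegrable F μ a m) (hF_right : IntervalIntegrable F μ m b)
    (hf_left : IntervalIntegrable f μ a m) (hf_right : IntervalIntegrable f μ m b)
    (hleft : ∫ x in a..m, F x ∂μ ≤ M * (∫ x in a..m, f x ∂μ) ^ k)
    (hright : ∫ x in m..b, F x ∂μ ≤ M * (∫ x in m..b, f x ∂μ) ^ k) :
    ∫ x in a..b, F x ∂μ ≤ M * (∫ x in a..b, f x ∂μ) ^ k := by
  have hA : 0 ≤ ∫ x in a..m, f x ∂μ := intervalIntegral.integral_nonneg_of_forall ham hf_nonneg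
  have hB : 0 ≤ ∫ x in m..b, f x ∂μ := intervalIntegral.integral_nonneg_of_forall hmb hf_nonneg
  calc ∫ x in a..b, F x ∂μ = (∫ x in a..m, F x ∂μ) + ∫ x in m..b, F x ∂μ :=
        (intervalIntegral.integral_add_adjacent_intervals hF_left hF_right).symm
    _ ≤ M * ((∫ x in a..m, f x ∂μ) ^ k + (∫ x in m..b, f x ∂μ) ^ k) := by
        rw [mul_add]
        exact add_le_add hleft hright
    _ ≤ M * ((∫ x in a..m, f x ∂μ) + ∫ x in m..b, f x ∂μ) ^ k := by
        gcongr
        exact pow_add_pow_le hA hB hk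
    _ = M * (∫ x in a..b, f x ∂μ) ^ k := by
        rw [intervalIntegral.integral_add_adjacent_intervals hf_left hf_right]

theorem intervalIntegrable_of_eqOn_Ioo {E : Type*} [NormedAddCommGroup E] {f u : ℝ → E} {a b : ℝ}
    (hab : a ≤ b) (hu : Continuous u) (hfu : Set.EqOn f u (Set.Ioo a b)) :
    IntervalIntegrable f volume a b :=
  (hu.intervalIntegrable a b).congr_uIoo (Set.uIoo_of_le hab ▸ hfu.symm)

theorem exists_integral_sq_le_of_eqOn_eval (n : ℕ) :
    ∃ K : ℝ, 0 < K ∧ ∀ a b δ : ℝ, 0 < δ → δ ≤ b - a →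
      ∀ (f : ℝ → ℝ) (q : ℝ[X]), q.natDegree ≤ n → Set.EqOn f q.eval (Set.Ioo a b) →
        ∫ x in a..b, f x ^ 2 ≤ K / δ * (∫ x in a..b, |f x|) ^ 2 := by
  obtain ⟨K, hK, hpoly⟩ := exists_integral_sq_eval_le n
  refine ⟨K, hK, fun a b δ hδ hδab f q hq hfq => ?_⟩
  have hab : a < b := sub_pos.mp (hδ.trans_le hδab)
  have hsq : ∫ x in a..b, f x ^ 2 = ∫ x in a..b, q.eval x ^ 2 :=
    intervalIntegral.integral_congr_Ioo_of_le hab.le (hfq.comp_left (g := (· ^ 2)))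
  have habs : ∫ x in a..b, |f x| = ∫ x in a..b, |q.eval x| :=
    intervalIntegral.integral_congr_Ioo_of_le hab.le (hfq.comp_left (g := abs))
  rw [hsq, habs]
  calc ∫ x in a..b, q.eval x ^ 2
      ≤ K / (b - a) * (∫ x in a..b, |q.eval x|) ^ 2 := hpoly a b hab q hq
    _ ≤ K / δ * (∫ x in a..b, |q.eval x|) ^ 2 := by gcongr

theorem inverse_inequality_L1_L2_general (p : ℕ) {θ : ℝ} (hθ : 0 < θ) :
    ∃ C : ℝ, 0 < C ∧
      ∀ α m β : ℝ, α < β → θ * (β - α) ≤ m - α → θ * (β - α) ≤ β - m →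
      ∀ g : ℝ → ℝ, ∀ ql qr : ℝ[X],
        ql.natDegree ≤ p → qr.natDegree ≤ p →
        Set.EqOn g ql.eval (Set.Ioo α m) →
        Set.EqOn g qr.eval (Set.Ioo m β) →
        (∫ x in α..β, |g x|) ≥ C * √(β - α) * √(∫ x in α..β, g x ^ 2) := by
  obtain ⟨K, hK, hpiece⟩ := exists_integral_sq_le_of_eqOn_eval p
  refine ⟨√(θ / K), by positivity, fun α m β hαβ hm_left hm_right g ql qr hql hqr hgl hgr => ?_⟩
  have hβα : 0 < β - α := sub_pos.mpr hαβ
  have hδ : 0 < θ * (β - α) := by positivity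
  have hαm : α ≤ m := by linarith
  have hmβ : m ≤ β := by linarith
  have hsq : ∫ x in α..β, g x ^ 2 ≤ K / (θ * (β - α)) * (∫ x in α..β, |g x|) ^ 2 :=
    integral_le_mul_integral_pow_of_adjacent hαm hmβ two_ne_zero (by positivity)
      (fun _ => abs_nonneg _)
      (intervalIntegrable_of_eqOn_Ioo hαm (ql.continuous.pow 2) (hgl.comp_left (g := (· ^ 2))))
      (intervalIntegrable_of_eqOn_Ioo hmβ (qr.continuous.pow 2) (hgr.comp_left (g := (· ^ 2))))
      (intervalIntegrable_of_eqOn_Ioo hαm ql.continuous hgl).abs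
      (intervalIntegrable_of_eqOn_Ioo hmβ qr.continuous hgr).abs
      (hpiece α m _ hδ hm_left g ql hql hgl) (hpiece m β _ hδ hm_right g qr hqr hgr)
  calc √(θ / K) * √(β - α) * √(∫ x in α..β, g x ^ 2)
      = √(θ / K * (β - α) * ∫ x in α..β, g x ^ 2) := by
        rw [← Real.sqrt_mul (by positivity), ← Real.sqrt_mul (by positivity)]
    _ ≤ √((∫ x in α..β, |g x|) ^ 2) := by
        gcongr
        calc θ / K * (β - α) * ∫ x in α..β, g x ^ 2
            ≤ θ / K * (β - α) * (K / (θ * (β - α)) * (∫ x in α..β, |g x|) ^ 2) := by gcongr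
          _ = (∫ x in α..β, |g x|) ^ 2 := by field_simp
    _ = ∫ x in α..β, |g x| :=
        Real.sqrt_sq (intervalIntegral.integral_nonneg_of_forall hαβ.le fun _ => abs_nonneg _)

/-- inverse inequality `‖g‖_{L¹} ≥ C h^{1/2} ‖g‖_{L²}` on an interval of
length `h`, for functions that are polynomial of degree ≤ p on each half of the
interval, with `C > 0` depending only on `p`. -/
theorem inverse_inequality_L1_L2 (p : ℕ) :
    ∃ C : ℝ, 0 < C ∧
      ∀ α β : ℝ, α < β →
      ∀ g : ℝ → ℝ, ∀ ql qr : Polynomial ℝ,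
        ql.natDegree ≤ p → qr.natDegree ≤ p →
        (∀ x ∈ Set.Ioo α ((α + β)/2), g x = ql.eval x) →
        (∀ x ∈ Set.Ioo ((α + β)/2) β, g x = qr.eval x) →
        (∫ x in α..β, |g x|) ≥
          C * Real.sqrt (β - α) * Real.sqrt (∫ x in α..β, (g x)^2) := by
  obtain ⟨C, hC, h⟩ := inverse_inequality_L1_L2_general p (one_half_pos (α := ℝ))
  exact ⟨C, hC, fun α β hαβ => h α ((α + β) / 2) β hαβ (by linarith) (by linarith)⟩
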